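/- In the polynomial ring R = ℂ[a,b,c,d,e,f], the ideal generated by u₀, u₁, u₂ equals the intersection of the six ideals 𝔭₁ = (b−c, a−c), 𝔭₂ = (e−f, d−f), 𝔭₃ = (e−f, a−b), 𝔭₄ = (d−e, b−c), 𝔭₅ = (d−f, a−c), 𝔭₆ = (c−d, b−e, a−f). (Hence the indeterminacy scheme of the Pascal map for the symbol [A B C; F E D] is the reduced union of the six corresponding polydiagonals.) -/

import Mathlib

open MvPolynomial

namespace PascalIndet

noncomputable section

/-- The variables `a, b, c, d, e, f` of the polynomial ring `R = ℂ[a,b,c,d,e,f]`. -/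
def a : MvPolynomial (Fin 6) ℂ := X 0
def b : MvPolynomial (Fin 6) ℂ := X 1
def c : MvPolynomial (Fin 6) ℂ := X 2
def d : MvPolynomial (Fin 6) ℂ := X 3
def e : MvPolynomial (Fin 6) ℂ := X 4
def f : MvPolynomial (Fin 6) ℂ := X 5

/-- The coordinates `u₀, u₁, u₂` of the Pascal line of the array
`[τ a, τ b, τ c; τ f, τ e, τ d]`. -/
def u0 : MvPolynomial (Fin 6) ℂ :=
  a*b*d*e - a*b*d*f - a*c*d*e + a*c*e*f + b*c*d*f - b*c*e*f
def u1 : MvPolynomial (Fin 6) ℂ :=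
  -(a*b*e) + a*b*f + a*c*d - a*c*f + a*d*f - a*e*f - b*c*d + b*c*e - b*d*e + b*e*f + c*d*e - c*d*f
def u2 : MvPolynomial (Fin 6) ℂ :=
  -(a*d) + a*e + b*d - b*f - c*e + c*f

/-!
If `I ≤ P` and `g` is a nonzerodivisor modulo `P`, then `(I + (g)) ∩ P = I + g P`. The intersection
of the six polydiagonals is computed by applying this repeatedly. With `x = a - b`, `y = b - c`,
`w = d - e`, `z = e - f`, the first four ideals are `(y, x)`, `(z, w)`, `(z, x)`, `(w, y)`, and they
meet in `(y z, x w) = (u₂, x w)`. The fifth, `(w + z, x + y)`, contains `u₂ = y z - x w`, and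
intersecting with it leaves `(u₂, q, r)`, where `q = x y (w + z)` and `r = z w (x + y)`. The last
polydiagonal `P` contains `u₂` and `q + r`, so the result is `(u₂, q + r) + q P`. This is
`(u₀, u₁, u₂)`: modulo `u₂`, `q + r` is `-u₁`, while `q (a - f)`, `q (b - e)` and `q (c - d)` are up
to sign the values of the linear form `u₀ z₀ + u₁ z₁ + u₂ z₂` at the points `τ a`, `τ b` and `τ c`.
-/

section RegularModuloIdeal

variable {A : Type*} [CommRing A]

theorem span_singleton_inf_eq_mul {P : Ideal A} {g : A} (hg : IsSMulRegular (A ⧸ P) g) :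
    Ideal.span {g} ⊓ P = Ideal.span {g} * P := by
  refine le_antisymm ?_ Ideal.mul_le_inf
  rintro _ ⟨hF, hP⟩
  obtain ⟨h, rfl⟩ := Ideal.mem_span_singleton.1 hF
  exact Ideal.mul_mem_mul (Ideal.mem_span_singleton_self g)
    (mem_of_isSMulRegular_quotient_of_smul_mem hg hP)

theorem sup_span_singleton_inf {I P : Ideal A} {g : A} (hIP : I ≤ P)
    (hg : IsSMulRegular (A ⧸ P) g) :
    (I ⊔ Ideal.span {g}) ⊓ P = I ⊔ Ideal.span {g} * P := by
  rw [sup_inf_assoc_of_le _ hIP, span_singleton_inf_eq_mul hg]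

theorem span_pair_inf_span_pair {x y z : A} (hy : IsSMulRegular (A ⧸ Ideal.span {z, x}) y) :
    Ideal.span {y, x} ⊓ Ideal.span {z, x} = Ideal.span {y * z, x} := by
  have hx : Ideal.span {y} * Ideal.span {x} ≤ Ideal.span {x} := Ideal.mul_le_right
  rw [Ideal.span_insert y, sup_comm, sup_span_singleton_inf (Ideal.span_mono (by simp)) hy,
    Ideal.span_insert z, Ideal.mul_sup, Ideal.span_singleton_mul_span_singleton,
    Ideal.span_insert, sup_comm, sup_assoc, sup_eq_right.2 hx]

theorem isSMulRegular_quotient_inf {I J : Ideal A} {g : A} (hI : IsSMulRegular (A ⧸ I) g)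
    (hJ : IsSMulRegular (A ⧸ J) g) : IsSMulRegular (A ⧸ I ⊓ J) g := by
  rw [isSMulRegular_quotient_iff_mem_of_smul_mem] at *
  exact fun F hF => ⟨hI F hF.1, hJ F hF.2⟩

theorem isSMulRegular_quotient_ker {B F : Type*} [CommRing B] [FunLike F A B]
    [RingHomClass F A B] {φ : F} {g : A}
    (hg : IsLeftRegular (φ g)) : IsSMulRegular (A ⧸ RingHom.ker φ) g := by
  rw [isSMulRegular_quotient_iff_mem_of_smul_mem]
  intro h hgh
  rw [RingHom.mem_ker, smul_eq_mul, map_mul] at hgh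
  exact hg (by simpa using hgh)

end RegularModuloIdeal

section Polydiagonal

variable {σ τ k : Type*} [CommRing k]

theorem isLeftRegular_X_sub_X {i j : σ} (hij : i ≠ j) :
    IsLeftRegular (X i - X j : MvPolynomial σ k) := by
  classical
  let φ : MvPolynomial σ k →ₐ[k] MvPolynomial σ k := aeval (Function.update X i (X i + X j))
  let ψ : MvPolynomial σ k →ₐ[k] MvPolynomial σ k := aeval (Function.update X i (X i - X j))
  have hψφ : ψ.comp φ = AlgHom.id k _ := by
    ext l
    by_cases hl : l = i <;> simp [φ, ψ, hl, hij.symm]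
  have hφ : Function.LeftInverse ψ φ := DFunLike.congr_fun hψφ
  have hφX : φ (X i - X j) = X i := by simp [φ, hij.symm]
  intro F G hFG
  refine hφ.injective ((isRegular_X (n := i)).left ?_)
  simpa only [map_mul, hφX] using congrArg φ hFG

variable (k) in
/-- The ideal of the polydiagonal formed by the points of affine `σ`-space over `k` that are
constant on the fibres of `p`. It is encoded as the kernel of the pullback of polynomial functions
along the parametrization `y ↦ y ∘ p`. -/
def polydiagonalIdeal (p : σ → τ) : Ideal (MvPolynomial σ k) :=
  RingHom.ker (rename p : MvPolynomial σ k →ₐ[k] MvPolynomial τ k)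

theorem mem_polydiagonalIdeal {p : σ → τ} {F : MvPolynomial σ k} :
    F ∈ polydiagonalIdeal k p ↔ rename p F = 0 :=
  RingHom.mem_ker

theorem span_eq_polydiagonalIdeal {S : Set (MvPolynomial σ k)} {p : σ → σ}
    (hS : S ⊆ polydiagonalIdeal k p) (hp : ∀ i, p i ≠ i → X i - X (p i) ∈ S) :
    Ideal.span S = polydiagonalIdeal k p := by
  refine le_antisymm (Ideal.span_le.2 hS) fun F hF => ?_
  have mk_comp_rename : (Ideal.Quotient.mkₐ k (Ideal.span S)).comp (rename p) =
      Ideal.Quotient.mkₐ k (Ideal.span S) := by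
    ext i
    by_cases hi : p i = i
    · simp [hi]
    · simpa using (Ideal.Quotient.eq.2 (Ideal.subset_span (hp i hi))).symm
  rw [← Ideal.Quotient.eq_zero_iff_mem, ← Ideal.Quotient.mkₐ_eq_mk k, ← mk_comp_rename,
    AlgHom.comp_apply, mem_polydiagonalIdeal.1 hF, map_zero]

theorem isSMulRegular_X_sub_X {P : Ideal (MvPolynomial σ k)} {p : σ → τ}
    (hP : P = polydiagonalIdeal k p) {i j : σ} (hij : p i ≠ p j) :
    IsSMulRegular (MvPolynomial σ k ⧸ P) (X i - X j : MvPolynomial σ k) := by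
  subst hP
  refine isSMulRegular_quotient_ker ?_
  simpa using isLeftRegular_X_sub_X hij

end Polydiagonal

section CodimensionTwo

variable {A : Type*} [CommRing A] {x y z w : A}

theorem inf_four_span_pairs
    (hx₂ : IsSMulRegular (A ⧸ Ideal.span {z, w}) x)
    (hy₂ : IsSMulRegular (A ⧸ Ideal.span {z, w}) y)
    (hy₃ : IsSMulRegular (A ⧸ Ideal.span {z, x}) y)
    (hx₄ : IsSMulRegular (A ⧸ Ideal.span {w, y}) x) :
    Ideal.span {y, x} ⊓ Ideal.span {z, w} ⊓ Ideal.span {z, x} ⊓ Ideal.span {w, y} =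
      Ideal.span {y * z - x * w, x * w} := by
  have h₁₃ : Ideal.span {y, x} ⊓ Ideal.span {z, x} = Ideal.span {x, y * z} := by
    rw [span_pair_inf_span_pair hy₃, Ideal.span_pair_comm]
  have h₂₄ : Ideal.span {z, w} ⊓ Ideal.span {w, y} = Ideal.span {w, y * z} := by
    rw [inf_comm, Ideal.span_pair_comm (x := w), span_pair_inf_span_pair hy₂, Ideal.span_pair_comm]
  have hx₂₄ : IsSMulRegular (A ⧸ Ideal.span {w, y * z}) x :=
    h₂₄ ▸ isSMulRegular_quotient_inf hx₂ hx₄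
  rw [inf_assoc, inf_inf_inf_comm, h₁₃, h₂₄, span_pair_inf_span_pair hx₂₄, Ideal.span_pair_comm,
    Ideal.span_pair_sub_right]

theorem span_pair_inf_span_add_add
    (hx : IsSMulRegular (A ⧸ Ideal.span {w + z, x + y}) x)
    (hw : IsSMulRegular (A ⧸ Ideal.span {w + z, x + y}) w) :
    Ideal.span {y * z - x * w, x * w} ⊓ Ideal.span {w + z, x + y} =
      Ideal.span {y * z - x * w, x * y * (w + z), z * w * (x + y)} := by
  have hu : Ideal.span {y * z - x * w} ≤ Ideal.span {w + z, x + y} := by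
    rw [Ideal.span_singleton_le_iff_mem, Ideal.mem_span_pair]
    exact ⟨-x, z, by ring⟩
  rw [Ideal.span_insert, sup_span_singleton_inf hu (hx.mul hw), Ideal.span_mul_span',
    Set.singleton_mul, Set.image_pair, ← Ideal.span_union, Set.singleton_union]
  apply le_antisymm <;> rw [Ideal.span_le]
  · rintro _ (rfl | rfl | rfl) <;> refine Submodule.mem_span_triple.2 ?_ <;>
      simp only [smul_eq_mul]
    · exact ⟨1, 0, 0, by ring⟩
    · exact ⟨-w, 0, 1, by ring⟩
    · exact ⟨-x, 1, 0, by ring⟩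
  · rintro _ (rfl | rfl | rfl) <;> refine Submodule.mem_span_triple.2 ?_ <;>
      simp only [smul_eq_mul]
    · exact ⟨1, 0, 0, by ring⟩
    · exact ⟨x, 0, 1, by ring⟩
    · exact ⟨w, 1, 0, by ring⟩

end CodimensionTwo

section PascalIdeal

variable {A : Type*} [CommRing A] (a b c d e f : A)

/-- The first coordinate of the Pascal line of the array `[τ a, τ b, τ c; τ f, τ e, τ d]`, where
`τ s = (1, s, s²)`, for parameters in an arbitrary commutative ring. -/
def pascalCoord₀ : A :=
  a * b * d * e - a * b * d * f - a * c * d * e + a * c * e * f + b * c * d * f - b * c * e * f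

/-- The second coordinate of the Pascal line of the array `[τ a, τ b, τ c; τ f, τ e, τ d]`. -/
def pascalCoord₁ : A :=
  -(a * b * e) + a * b * f + a * c * d - a * c * f + a * d * f - a * e * f - b * c * d +
    b * c * e - b * d * e + b * e * f + c * d * e - c * d * f

/-- The third coordinate of the Pascal line of the array `[τ a, τ b, τ c; τ f, τ e, τ d]`. -/
def pascalCoord₂ : A :=
  -(a * d) + a * e + b * d - b * f - c * e + c * f

/-- The ideal of the indeterminacy scheme of the Pascal map: it is generated by the coordinates of
the Pascal line of `[τ a, τ b, τ c; τ f, τ e, τ d]`. -/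
def pascalIdeal : Ideal A :=
  Ideal.span {pascalCoord₀ a b c d e f, pascalCoord₁ a b c d e f, pascalCoord₂ a b c d e f}

local notation "u₀" => pascalCoord₀ a b c d e f
local notation "u₁" => pascalCoord₁ a b c d e f
local notation "u₂" => pascalCoord₂ a b c d e f

theorem pascalCoord₂_eq : u₂ = (b - c) * (e - f) - (a - b) * (d - e) := by
  rw [pascalCoord₂]
  ring

theorem pascalCoord₁_eq :
    u₁ = -((a - b) * (b - c) * (d - f) + (e - f) * (d - e) * (a - c)) - (b + e) * u₂ := by
  rw [pascalCoord₁, pascalCoord₂]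
  ring

theorem pascalLine_eval_tau_a :
    u₀ + a * u₁ + a ^ 2 * u₂ = -((a - b) * (d - e) * (a - c) * (a - f)) := by
  rw [pascalCoord₀, pascalCoord₁, pascalCoord₂]
  ring

theorem pascalLine_eval_tau_b :
    u₀ + b * u₁ + b ^ 2 * u₂ = -((a - b) * (b - c) * (d - f) * (b - e)) := by
  rw [pascalCoord₀, pascalCoord₁, pascalCoord₂]
  ring

theorem pascalLine_eval_tau_c :
    u₀ + c * u₁ + c ^ 2 * u₂ = -((b - c) * (e - f) * (a - c) * (c - d)) := by
  rw [pascalCoord₀, pascalCoord₁, pascalCoord₂]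
  ring

theorem pascalCoord₁_mem_pascalIdeal : u₁ ∈ pascalIdeal a b c d e f :=
  Ideal.subset_span (by simp)

theorem pascalCoord₂_mem_pascalIdeal : u₂ ∈ pascalIdeal a b c d e f :=
  Ideal.subset_span (by simp)

theorem pascalLine_eval_mem_pascalIdeal (s : A) :
    u₀ + s * u₁ + s ^ 2 * u₂ ∈ pascalIdeal a b c d e f :=
  Submodule.mem_span_triple.2 ⟨1, s, s ^ 2, by simp only [smul_eq_mul, one_mul]⟩

theorem mul_sub_f_mem_pascalIdeal :
    (a - b) * (b - c) * (d - f) * (a - f) ∈ pascalIdeal a b c d e f := by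
  convert sub_mem
    (Ideal.mul_mem_left _ ((a - b) * (a - f)) (pascalCoord₂_mem_pascalIdeal a b c d e f))
    (pascalLine_eval_mem_pascalIdeal a b c d e f a) using 1
  rw [pascalLine_eval_tau_a, pascalCoord₂_eq]
  ring

theorem mul_sub_e_mem_pascalIdeal :
    (a - b) * (b - c) * (d - f) * (b - e) ∈ pascalIdeal a b c d e f := by
  rw [← neg_mem_iff, ← pascalLine_eval_tau_b]
  exact pascalLine_eval_mem_pascalIdeal a b c d e f b

theorem mul_sub_d_mem_pascalIdeal :
    (a - b) * (b - c) * (d - f) * (c - d) ∈ pascalIdeal a b c d e f := by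
  convert sub_mem
    (Ideal.mul_mem_left _ (-((b - c) * (c - d))) (pascalCoord₂_mem_pascalIdeal a b c d e f))
    (pascalLine_eval_mem_pascalIdeal a b c d e f c) using 1
  rw [pascalLine_eval_tau_c, pascalCoord₂_eq]
  ring

theorem pascalIdeal_eq_sup_mul :
    pascalIdeal a b c d e f =
      Ideal.span {u₂, (a - b) * (b - c) * (d - f) + (e - f) * (d - e) * (a - c)} ⊔
        Ideal.span {(a - b) * (b - c) * (d - f)} * Ideal.span {c - d, b - e, a - f} := by
  refine le_antisymm ?_ (sup_le ?_ ?_)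
  · set I := Ideal.span {u₂, (a - b) * (b - c) * (d - f) + (e - f) * (d - e) * (a - c)}
    set J := Ideal.span {(a - b) * (b - c) * (d - f)} * Ideal.span {c - d, b - e, a - f}
    have hu₂ : u₂ ∈ I ⊔ J := Ideal.mem_sup_left (Ideal.subset_span (by simp))
    have hu₁ : u₁ ∈ I ⊔ J := by
      rw [pascalCoord₁_eq]
      exact sub_mem (neg_mem (Ideal.mem_sup_left (Ideal.subset_span (by simp))))
        (Ideal.mul_mem_left _ _ hu₂)
    have hb : u₀ + b * u₁ + b ^ 2 * u₂ ∈ I ⊔ J := by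
      rw [pascalLine_eval_tau_b]
      exact neg_mem (Ideal.mem_sup_right (Ideal.mul_mem_mul (Ideal.mem_span_singleton_self _)
        (Ideal.subset_span (by simp))))
    have hu₀ : u₀ ∈ I ⊔ J := by
      rwa [Ideal.add_mem_iff_left _ (Ideal.mul_mem_left _ _ hu₂),
        Ideal.add_mem_iff_left _ (Ideal.mul_mem_left _ _ hu₁)] at hb
    rw [pascalIdeal, Ideal.span_le]
    rintro _ (rfl | rfl | rfl) <;> assumption
  · simp only [Ideal.span_insert, sup_le_iff, Ideal.span_singleton_le_iff_mem]
    refine ⟨pascalCoord₂_mem_pascalIdeal a b c d e f, ?_⟩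
    convert neg_mem (add_mem (pascalCoord₁_mem_pascalIdeal a b c d e f)
      (Ideal.mul_mem_left _ (b + e) (pascalCoord₂_mem_pascalIdeal a b c d e f))) using 1
    rw [pascalCoord₁_eq]
    ring
  · rw [Ideal.span_mul_span', Set.singleton_mul, Ideal.span_le]
    rintro _ ⟨_, rfl | rfl | rfl, rfl⟩
    · exact mul_sub_d_mem_pascalIdeal a b c d e f
    · exact mul_sub_e_mem_pascalIdeal a b c d e f
    · exact mul_sub_f_mem_pascalIdeal a b c d e f

variable {a b c d e f}

theorem span_triple_inf_eq_pascalIdeal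
    (h : IsSMulRegular (A ⧸ Ideal.span {c - d, b - e, a - f}) ((a - b) * (b - c) * (d - f))) :
    Ideal.span {(b - c) * (e - f) - (a - b) * (d - e), (a - b) * (b - c) * (d - f),
        (e - f) * (d - e) * (a - c)} ⊓ Ideal.span {c - d, b - e, a - f} =
      pascalIdeal a b c d e f := by
  have hle : Ideal.span {u₂, (a - b) * (b - c) * (d - f) + (e - f) * (d - e) * (a - c)} ≤
      Ideal.span {c - d, b - e, a - f} := by
    simp only [Ideal.span_insert u₂, sup_le_iff, Ideal.span_singleton_le_iff_mem,
      Submodule.mem_span_triple, smul_eq_mul]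
    constructor
    · refine ⟨a - b, c - a, b - c, ?_⟩
      rw [pascalCoord₂]
      ring
    · let s := (a - b) * (d - e) + (e - f) * (d - e) + (e - f) * (a - b)
      exact ⟨-s, (d - e) ^ 2 + s, -(d - e) ^ 2, by ring⟩
  rw [pascalIdeal_eq_sup_mul, ← sup_span_singleton_inf hle h, Ideal.span_insert u₂, sup_assoc,
    ← Ideal.span_insert, Ideal.span_pair_comm, Ideal.span_pair_left_add, ← Ideal.span_insert,
    pascalCoord₂_eq]

theorem pascalIdeal_eq_inf_of_isSMulRegular
    (hab₂ : IsSMulRegular (A ⧸ Ideal.span {e - f, d - f}) (a - b))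
    (hbc₂ : IsSMulRegular (A ⧸ Ideal.span {e - f, d - f}) (b - c))
    (hbc₃ : IsSMulRegular (A ⧸ Ideal.span {e - f, a - b}) (b - c))
    (hab₄ : IsSMulRegular (A ⧸ Ideal.span {d - e, b - c}) (a - b))
    (hab₅ : IsSMulRegular (A ⧸ Ideal.span {d - f, a - c}) (a - b))
    (hde₅ : IsSMulRegular (A ⧸ Ideal.span {d - f, a - c}) (d - e))
    (h₆ : IsSMulRegular (A ⧸ Ideal.span {c - d, b - e, a - f}) ((a - b) * (b - c) * (d - f))) :
    pascalIdeal a b c d e f =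
      Ideal.span {b - c, a - c} ⊓
      Ideal.span {e - f, d - f} ⊓
      Ideal.span {e - f, a - b} ⊓
      Ideal.span {d - e, b - c} ⊓
      Ideal.span {d - f, a - c} ⊓
      Ideal.span {c - d, b - e, a - f} := by
  have hac : a - c = (a - b) + (b - c) := (sub_add_sub_cancel a b c).symm
  have hdf : d - f = (d - e) + (e - f) := (sub_add_sub_cancel d e f).symm
  have h₁ : Ideal.span {b - c, a - c} = Ideal.span {b - c, a - b} := by
    rw [hac, Ideal.span_pair_add_left]
  have h₂ : Ideal.span {e - f, d - f} = Ideal.span {e - f, d - e} := by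
    rw [hdf, Ideal.span_pair_add_left]
  rw [h₂] at hab₂ hbc₂
  rw [hdf, hac] at hab₅ hde₅
  rw [h₁, h₂, inf_four_span_pairs hab₂ hbc₂ hbc₃ hab₄, hdf, hac,
    span_pair_inf_span_add_add hab₅ hde₅, ← hdf, ← hac, span_triple_inf_eq_pascalIdeal h₆]

end PascalIdeal

section PolynomialRing

variable (k : Type*) [CommRing k]

theorem span_ef_df_eq_polydiagonalIdeal :
    Ideal.span {X 4 - X 5, X 3 - X 5} =
      polydiagonalIdeal k (![0, 1, 2, 5, 5, 5] : Fin 6 → Fin 6) := by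
  refine span_eq_polydiagonalIdeal ?_ fun i => ?_
  · simp [Set.insert_subset_iff, mem_polydiagonalIdeal]
  · fin_cases i <;> simp

theorem span_ef_ab_eq_polydiagonalIdeal :
    Ideal.span {X 4 - X 5, X 0 - X 1} =
      polydiagonalIdeal k (![1, 1, 2, 3, 5, 5] : Fin 6 → Fin 6) := by
  refine span_eq_polydiagonalIdeal ?_ fun i => ?_
  · simp [Set.insert_subset_iff, mem_polydiagonalIdeal]
  · fin_cases i <;> simp

theorem span_de_bc_eq_polydiagonalIdeal :
    Ideal.span {X 3 - X 4, X 1 - X 2} =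
      polydiagonalIdeal k (![0, 2, 2, 4, 4, 5] : Fin 6 → Fin 6) := by
  refine span_eq_polydiagonalIdeal ?_ fun i => ?_
  · simp [Set.insert_subset_iff, mem_polydiagonalIdeal]
  · fin_cases i <;> simp

theorem span_df_ac_eq_polydiagonalIdeal :
    Ideal.span {X 3 - X 5, X 0 - X 2} =
      polydiagonalIdeal k (![2, 1, 2, 5, 4, 5] : Fin 6 → Fin 6) := by
  refine span_eq_polydiagonalIdeal ?_ fun i => ?_
  · simp [Set.insert_subset_iff, mem_polydiagonalIdeal]
  · fin_cases i <;> simp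

theorem span_cd_be_af_eq_polydiagonalIdeal :
    Ideal.span {X 2 - X 3, X 1 - X 4, X 0 - X 5} =
      polydiagonalIdeal k (![5, 4, 3, 3, 4, 5] : Fin 6 → Fin 6) := by
  refine span_eq_polydiagonalIdeal ?_ fun i => ?_
  · simp [Set.insert_subset_iff, mem_polydiagonalIdeal]
  · fin_cases i <;> simp

theorem pascal_indeterminacy_decomposition_general :
    pascalIdeal (X 0 : MvPolynomial (Fin 6) k) (X 1) (X 2) (X 3) (X 4) (X 5) =
      Ideal.span {X 1 - X 2, X 0 - X 2} ⊓
      Ideal.span {X 4 - X 5, X 3 - X 5} ⊓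
      Ideal.span {X 4 - X 5, X 0 - X 1} ⊓
      Ideal.span {X 3 - X 4, X 1 - X 2} ⊓
      Ideal.span {X 3 - X 5, X 0 - X 2} ⊓
      Ideal.span {X 2 - X 3, X 1 - X 4, X 0 - X 5} := by
  have h₂ := span_ef_df_eq_polydiagonalIdeal k
  have h₃ := span_ef_ab_eq_polydiagonalIdeal k
  have h₄ := span_de_bc_eq_polydiagonalIdeal k
  have h₅ := span_df_ac_eq_polydiagonalIdeal k
  have h₆ := span_cd_be_af_eq_polydiagonalIdeal k
  apply pascalIdeal_eq_inf_of_isSMulRegular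
  · exact isSMulRegular_X_sub_X h₂ (by decide)
  · exact isSMulRegular_X_sub_X h₂ (by decide)
  · exact isSMulRegular_X_sub_X h₃ (by decide)
  · exact isSMulRegular_X_sub_X h₄ (by decide)
  · exact isSMulRegular_X_sub_X h₅ (by decide)
  · exact isSMulRegular_X_sub_X h₅ (by decide)
  · exact ((isSMulRegular_X_sub_X h₆ (by decide)).mul (isSMulRegular_X_sub_X h₆ (by decide))).mul
      (isSMulRegular_X_sub_X h₆ (by decide))

end PolynomialRing

/-- The minimal primary decomposition `𝐈ₛ = 𝔭₁ ∩ ⋯ ∩ 𝔭₆` of the ideal of the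
indeterminacy scheme of the Pascal map for the symbol `[A B C; F E D]`: it is the
reduced union of six polydiagonals. -/
theorem pascal_indeterminacy_decomposition :
    Ideal.span {u0, u1, u2} =
      Ideal.span {b - c, a - c} ⊓
      Ideal.span {e - f, d - f} ⊓
      Ideal.span {e - f, a - b} ⊓
      Ideal.span {d - e, b - c} ⊓
      Ideal.span {d - f, a - c} ⊓
      Ideal.span {c - d, b - e, a - f} :=
  pascal_indeterminacy_decomposition_general ℂ

end

end PascalIndet
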